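/- There exist R > 0 and a vector field V : Q̄ → ℝ³ with V ∈ C¹([0,T]; W^{1,2}(Ω_t;ℝ³) ∩ W^{1,∞}(Ω_t;ℝ³)) such that div_x V(t,·) = 0 in Ω_t for every t ∈ [0,T], V(t,·) = −ν_t n on Γ_t for every t ∈ [0,T], and V(t,x) = 0 for all t ∈ [0,T] and all |x| > R. -/

import Mathlib

open MeasureTheory Set Function Filter
open scoped RealInnerProductSpace ENNReal Topology

noncomputable section

abbrev E3 : Type := EuclideanSpace ℝ (Fin 3)

/-- the `i`-th coordinate vector -/
def e3 (i : Fin 3) : E3 := EuclideanSpace.single i (1:ℝ)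

/-- partial derivative -/
def pd (f : E3 → ℝ) (i : Fin 3) (x : E3) : ℝ := fderiv ℝ f x (e3 i)

/-- gradient -/
def grd (f : E3 → ℝ) (x : E3) : E3 := ∑ i, pd f i x • e3 i

/-- divergence -/
def dvg (u : E3 → E3) (x : E3) : ℝ := ∑ i, fderiv ℝ u x (e3 i) i

/-- velocity gradient matrix `(∇u)ᵢⱼ = ∂ⱼuᵢ` -/
def gradm (u : E3 → E3) (x : E3) : Matrix (Fin 3) (Fin 3) ℝ :=
  Matrix.of fun i j => fderiv ℝ u x (e3 j) i

/-- Frobenius product of matrices `A : B` -/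
def mdd (A B : Matrix (Fin 3) (Fin 3) ℝ) : ℝ := ∑ i, ∑ j, A i j * B i j

/-- tensor product `u ⊗ v` -/
def tens (u v : E3) : Matrix (Fin 3) (Fin 3) ℝ := Matrix.of fun i j => u i * v j

/-- the viscous stress tensor `S(M) = μ(M + Mᵀ - (2/3) tr M I) + η tr M I` -/
def Stens (μ η : ℝ) (M : Matrix (Fin 3) (Fin 3) ℝ) : Matrix (Fin 3) (Fin 3) ℝ :=
  μ • (M + M.transpose - ((2/3) * M.trace) • (1 : Matrix (Fin 3) (Fin 3) ℝ))
    + (η * M.trace) • (1 : Matrix (Fin 3) (Fin 3) ℝ)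

/-- Laplacian -/
def lapl (f : E3 → ℝ) (x : E3) : ℝ :=
  ∑ i, fderiv ℝ (fun y => fderiv ℝ f y (e3 i)) x (e3 i)

/-- Hessian matrix -/
def hess (f : E3 → ℝ) (x : E3) : Matrix (Fin 3) (Fin 3) ℝ :=
  Matrix.of fun i j => fderiv ℝ (fun y => fderiv ℝ f y (e3 j)) x (e3 i)

/-- the moving exterior domain `Ω_t = ℝ³ \ Σ_t`, where `Σ_t = {x | F(x - m t) < 0}` -/
def Dom (F : E3 → ℝ) (m : ℝ → E3) (t : ℝ) : Set E3 := {x | 0 ≤ F (x - m t)}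

/-- outer unit normal of the fluid domain (pointing into the rigid body) -/
def nvec (F : E3 → ℝ) (m : ℝ → E3) (t : ℝ) (x : E3) : E3 :=
  -(‖grd F (x - m t)‖⁻¹ • grd F (x - m t))

/-- `Σ₀` is a bounded domain of class `C²`, described by a regular value of a `C²` function. -/
structure DomainHyp (F : E3 → ℝ) : Prop where
  smooth : ContDiff ℝ 2 F
  bounded : Bornology.IsBounded {x : E3 | F x < 0}
  nonempty : {x : E3 | F x < 0}.Nonempty
  nondeg : ∀ x, F x = 0 → grd F x ≠ 0

/-- hypotheses on the barotropic pressure -/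
structure PressureHyp (p : ℝ → ℝ) (γ : ℝ) : Prop where
  gamma_gt : 3/2 < γ
  cont : ContinuousOn p (Ici 0)
  diff : ∀ r : ℝ, 0 < r → DifferentiableAt ℝ p r
  zero : p 0 = 0
  pos : ∀ r : ℝ, 0 < r → 0 < deriv p r
  growth : ∃ pinf : ℝ, 0 < pinf ∧
    Tendsto (fun r : ℝ => deriv p r / r ^ (γ - 1)) atTop (𝓝 pinf)

/-- the pressure potential `P(ϱ) = ϱ ∫₁^ϱ p(z)/z² dz` -/
def Pfun (p : ℝ → ℝ) (r : ℝ) : ℝ := r * ∫ z in (1:ℝ)..r, p z / z ^ 2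

/-- relative energy `H(ϱ) = P(ϱ) - P'(ϱ̄)(ϱ - ϱ̄) - P(ϱ̄)` -/
def Hfun (p : ℝ → ℝ) (ϱb r : ℝ) : ℝ :=
  Pfun p r - deriv (Pfun p) ϱb * (r - ϱb) - Pfun p ϱb

/-- the solenoidal corrector field of Lemma 2.1 -/
structure IsCorrector (T : ℝ) (m : ℝ → E3) (F : E3 → ℝ) (R : ℝ) (V : ℝ → E3 → E3) : Prop where
  smooth : ContDiff ℝ 1 ↿V
  sobolev : ∀ t ∈ Icc 0 T,
      eLpNorm (V t) 2 (volume.restrict (Dom F m t)) < ⊤ ∧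
      (∀ i j, eLpNorm (fun x => gradm (V t) x i j) 2 (volume.restrict (Dom F m t)) < ⊤) ∧
      eLpNorm (V t) ⊤ (volume.restrict (Dom F m t)) < ⊤ ∧
      (∀ i j, eLpNorm (fun x => gradm (V t) x i j) ⊤ (volume.restrict (Dom F m t)) < ⊤)
  divfree : ∀ t ∈ Icc 0 T, ∀ x ∈ Dom F m t, dvg (V t) x = 0
  bc : ∀ t ∈ Icc 0 T, ∀ x, F (x - m t) = 0 →
      V t x = ⟪deriv m t, nvec F m t x⟫ • nvec F m t x
  supp : ∀ t ∈ Icc 0 T, ∀ x : E3, R < ‖x‖ → V t x = 0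

/-- test vector fields tangential to the lateral boundary `Γ` -/
def Tangential (T : ℝ) (F : E3 → ℝ) (m : ℝ → E3) (φ : ℝ → E3 → E3) : Prop :=
  ∀ t ∈ Icc 0 T, ∀ x, F (x - m t) = 0 → ⟪φ t x, grd F (x - m t)⟫ = 0

/-- Definition 2.2 : finite-energy weak solution of the scaled compressible
Navier–Stokes system on the moving exterior domain. -/
structure IsWeakSolution (p : ℝ → ℝ) (γ μ η ϱb ε T : ℝ) (m : ℝ → E3) (F : E3 → ℝ)
    (V : ℝ → E3 → E3) (ϱ0 : E3 → ℝ) (u0 : E3 → E3)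
    (ϱ : ℝ → E3 → ℝ) (u : ℝ → E3 → E3) : Prop where
  nonneg : ∀ t x, 0 ≤ ϱ t x
  dens_int : ∃ C : ℝ≥0∞, C < ⊤ ∧ ∀ᵐ t ∂(volume.restrict (Ioc 0 T)), ∃ g h : E3 → ℝ,
      (∀ x, ϱ t x - ϱb = g x + h x) ∧
      eLpNorm g 2 (volume.restrict (Dom F m t)) ≤ C ∧
      eLpNorm h (ENNReal.ofReal γ) (volume.restrict (Dom F m t)) ≤ C
  vel_int : (∫⁻ t in Ioc 0 T,
      ((eLpNorm (u t) 2 (volume.restrict (Dom F m t))) ^ 2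
        + ∑ i, ∑ j,
          (eLpNorm (fun x => gradm (u t) x i j) 2 (volume.restrict (Dom F m t))) ^ 2)) < ⊤
  continuity : ∀ t ∈ Icc 0 T, ∀ φ : ℝ → E3 → ℝ, ContDiff ℝ (⊤ : ℕ∞) ↿φ → HasCompactSupport ↿φ →
    (∀ x ∈ Dom F m T, φ T x = 0) →
    ∀ b : ℝ → ℝ, ContDiff ℝ 1 b → b 0 = 0 → (∃ M, ∀ r, M ≤ r → deriv b r = 0) →
    ((∫ x in Dom F m t, (ϱ t x + b (ϱ t x)) * φ t x)
      - ∫ x in Dom F m 0, (ϱ0 x + b (ϱ0 x)) * φ 0 x)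
    = ∫ s in Ioc 0 t, ∫ x in Dom F m s,
        ((ϱ s x + b (ϱ s x)) * deriv (fun τ => φ τ x) s
         + (ϱ s x + b (ϱ s x)) * ⟪u s x, grd (φ s) x⟫
         + (b (ϱ s x) - deriv b (ϱ s x) * ϱ s x) * dvg (u s) x * φ s x)
  momentum : ∀ t ∈ Icc 0 T, ∀ φ : ℝ → E3 → E3, ContDiff ℝ (⊤ : ℕ∞) ↿φ → HasCompactSupport ↿φ →
    Tangential T F m φ →
    ((∫ x in Dom F m t, ϱ t x * ⟪u t x, φ t x⟫)
      - ∫ x in Dom F m 0, ϱ0 x * ⟪u0 x, φ 0 x⟫)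
    = ∫ s in Ioc 0 t, ∫ x in Dom F m s,
        (ϱ s x * ⟪u s x, deriv (fun τ => φ τ x) s⟫
         + ϱ s x * mdd (tens (u s x) (u s x)) (gradm (φ s) x)
         + ε⁻¹ * ε⁻¹ * p (ϱ s x) * dvg (φ s) x
         - mdd (Stens μ η (gradm (u s) x)) (gradm (φ s) x))
  energy : ∀ t ∈ Icc 0 T,
    ((∫ x in Dom F m t, ((1:ℝ)/2 * ϱ t x * ‖u t x‖ ^ 2 + ε⁻¹ * ε⁻¹ * Hfun p ϱb (ϱ t x)))
      + ∫ s in Ioc 0 t, ∫ x in Dom F m s,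
          mdd (Stens μ η (gradm (u s) x)) (gradm (u s) x))
    ≤ (∫ x in Dom F m 0, ((1:ℝ)/2 * ϱ0 x * ‖u0 x‖ ^ 2 + ε⁻¹ * ε⁻¹ * Hfun p ϱb (ϱ0 x)))
      + (∫ x in Dom F m t, ϱ t x * ⟪u t x, V t x⟫)
      - (∫ x in Dom F m 0, ϱ0 x * ⟪u0 x, V 0 x⟫)
      + ∫ s in Ioc 0 t, ∫ x in Dom F m s,
          (mdd (Stens μ η (gradm (u s) x)) (gradm (V s) x)
           - ϱ s x * mdd (tens (u s x) (u s x)) (gradm (V s) x)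
           - ϱ s x * ⟪u s x, deriv (fun τ => V τ x) s⟫)

/-- the essential set `{ϱ̄/2 < ϱ < 2ϱ̄}` -/
def essSet (ϱb : ℝ) (ρ : E3 → ℝ) : Set E3 := {x | ϱb / 2 < ρ x ∧ ρ x < 2 * ϱb}

/-- essential part of a function -/
def essPart (ϱb : ℝ) (ρ f : E3 → ℝ) : E3 → ℝ := (essSet ϱb ρ).indicator f

/-- residual part of a function -/
def resPart (ϱb : ℝ) (ρ f : E3 → ℝ) : E3 → ℝ := f - essPart ϱb ρ f

open Module
open scoped ContDiff Gradient

/-!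
For a `C²` field `Q` and a constant vector `c`, the field `(c · ∇)Q - (div Q) c` is divergence free
because second derivatives are symmetric. If moreover `DQ = n ⊗ n - (d - 1)⁻¹ I` on `∂Σ₀`, then
`div Q = -(d - 1)⁻¹` there, and the field equals `(c · n) n`. Taking `c = m'(t)` and translating by
`m(t)` gives `V`, which has compact support once `Q` is cut off away from `∂Σ₀`.

The difficulty is to make `Q` as smooth as `F`, although `n` is one derivative worse. Near `∂Σ₀` we
need a field with derivative `DF ⊗ u` on `{F = 0}`, where `u = |∇F|⁻² ∇F`, and `F u` is not smooth
enough. Instead let `M(s, x)` be the weighted mean of `u` around `x` at scale `s` and take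
`F(x) M(F(x), x)`. Since `s DM(s, x)` is again a mean of `u`, by an integration by parts that moves
the derivative to the weight, `s M(s, x)` is one derivative smoother than `u`.
-/

section Divergence

variable {E : Type*} [NormedAddCommGroup E] [NormedSpace ℝ E]

/-- The divergence of a vector field, defined without coordinates as the trace of its derivative. -/
def divergence (X : E → E) (x : E) : ℝ := LinearMap.trace ℝ E (fderiv ℝ X x)

theorem divergence_comp_sub (X : E → E) (a x : E) :
    divergence (fun y => X (y - a)) x = divergence X (x - a) := by
  rw [divergence, divergence, fderiv_comp_sub]

theorem hasCompactSupport_divergence {X : E → E} (hX : HasCompactSupport X) :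
    HasCompactSupport (divergence X) :=
  (hX.fderiv (𝕜 := ℝ)).comp_left (g := fun L : E →L[ℝ] E => LinearMap.trace ℝ E L) (by simp)

theorem divergence_eq_sum_coord {ι : Type*} [Fintype ι] (b : Basis ι ℝ E) (X : E → E) (x : E) :
    divergence X x = ∑ i, b.coord i (fderiv ℝ X x (b i)) := by
  classical
  simp [divergence, LinearMap.trace_eq_matrix_trace ℝ b, Matrix.trace, LinearMap.toMatrix_apply]

variable [FiniteDimensional ℝ E]

/-- The trace as a continuous linear functional on the continuous endomorphisms. -/
def traceL (E : Type*) [NormedAddCommGroup E] [NormedSpace ℝ E] [FiniteDimensional ℝ E] :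
    (E →L[ℝ] E) →L[ℝ] ℝ :=
  LinearMap.toContinuousLinearMap (LinearMap.trace ℝ E ∘ₗ ContinuousLinearMap.coeLM ℝ)

theorem traceL_apply (L : E →L[ℝ] E) : traceL E L = LinearMap.trace ℝ E L := rfl

theorem contDiff_divergence {n : WithTop ℕ∞} {X : E → E} (hX : ContDiff ℝ (n + 1) X) :
    ContDiff ℝ n (divergence X) :=
  (traceL E).contDiff.comp (hX.fderiv_right le_rfl)

theorem hasFDerivAt_divergence {X : E → E} {x : E} (hX : DifferentiableAt ℝ (fderiv ℝ X) x) :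
    HasFDerivAt (divergence X) ((traceL E).comp (fderiv ℝ (fderiv ℝ X) x)) x :=
  (traceL E).hasFDerivAt.comp x hX.hasFDerivAt

variable [MeasurableSpace E] [BorelSpace E] {Y : Type*} [NormedAddCommGroup Y] [NormedSpace ℝ Y]

theorem integral_smul_fderiv_eq_neg_of_hasCompactSupport (μ : Measure E) [μ.IsAddHaarMeasure]
    {φ : E → ℝ} {w : E → Y} (hφ : ContDiff ℝ 1 φ) (hφc : HasCompactSupport φ)
    (hw : ContDiff ℝ 1 w) (v : E) :
    ∫ y, φ y • fderiv ℝ w y v ∂μ = -∫ y, fderiv ℝ φ y v • w y ∂μ := by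
  have hφ' : Continuous fun y => fderiv ℝ φ y v := by fun_prop
  have hw' : Continuous fun y => fderiv ℝ w y v := by fun_prop
  have hφ'c : HasCompactSupport fun y => fderiv ℝ φ y v := hφc.fderiv_apply (𝕜 := ℝ) v
  refine integral_smul_fderiv_eq_neg_fderiv_smul_of_integrable ?_ ?_ ?_
    (fun y _ => hφ.differentiable one_ne_zero y) (fun y _ => hw.differentiable one_ne_zero y)
  · exact (hφ'.smul hw.continuous).integrable_of_hasCompactSupport hφ'c.smul_right
  · exact (hφ.continuous.smul hw').integrable_of_hasCompactSupport hφc.smul_right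
  · exact (hφ.continuous.smul hw.continuous).integrable_of_hasCompactSupport hφc.smul_right

theorem integral_fderiv_apply_eq_neg_integral_divergence_smul (μ : Measure E) [μ.IsAddHaarMeasure]
    {X : E → E} {w : E → Y} (hX : ContDiff ℝ 1 X) (hXc : HasCompactSupport X)
    (hw : ContDiff ℝ 1 w) :
    ∫ y, fderiv ℝ w y (X y) ∂μ = -∫ y, divergence X y • w y ∂μ := by
  let b := finBasis ℝ E
  let c := fun i => LinearMap.toContinuousLinearMap (b.coord i)
  have hcX : ∀ i, ContDiff ℝ 1 fun y => c i (X y) := fun i => (c i).contDiff.comp hX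
  have hcXc : ∀ i, HasCompactSupport fun y => c i (X y) := fun i => hXc.comp_left (map_zero (c i))
  have hcX' : ∀ i y, fderiv ℝ (fun y => c i (X y)) y (b i) = b.coord i (fderiv ℝ X y (b i)) :=
    fun i y => congr($(((c i).hasFDerivAt.comp y
      (hX.differentiable one_ne_zero y).hasFDerivAt).fderiv) (b i))
  calc ∫ y, fderiv ℝ w y (X y) ∂μ
      = ∫ y, ∑ i, c i (X y) • fderiv ℝ w y (b i) ∂μ := by
        refine integral_congr_ae (.of_forall fun y => ?_)
        simp only [← map_smul, ← map_sum]
        exact congrArg (fderiv ℝ w y) (b.sum_repr (X y)).symm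
    _ = ∑ i, ∫ y, c i (X y) • fderiv ℝ w y (b i) ∂μ :=
        integral_finsetSum _ fun i _ => Continuous.integrable_of_hasCompactSupport
          (by have := (hcX i).continuous; fun_prop) (hcXc i).smul_right
    _ = -∑ i, ∫ y, fderiv ℝ (fun y => c i (X y)) y (b i) • w y ∂μ := by
        rw [← Finset.sum_neg_distrib]
        exact Finset.sum_congr rfl fun i _ =>
          integral_smul_fderiv_eq_neg_of_hasCompactSupport μ (hcX i) (hcXc i) hw (b i)
    _ = -∫ y, divergence X y • w y ∂μ := by
        rw [← integral_finsetSum]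
        · simp only [hcX', divergence_eq_sum_coord b, Finset.sum_smul]
        · intro i _
          exact Continuous.integrable_of_hasCompactSupport
            (by have := hcX i; have := hw.continuous; fun_prop)
            ((hcXc i).fderiv_apply (𝕜 := ℝ) _).smul_right

end Divergence

section ParametricIntegral

variable {P E Y : Type*} [NormedAddCommGroup P] [NormedSpace ℝ P]
  [NormedAddCommGroup E] [NormedSpace ℝ E] [MeasurableSpace E] [BorelSpace E]
  [NormedAddCommGroup Y] [NormedSpace ℝ Y]
  {μ : Measure E} [IsLocallyFiniteMeasure μ] {g : P → E → Y} {K : Set E}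

theorem contDiff_integral_of_isCompact {n : ℕ∞}
    (hK : IsCompact K) (hgK : ∀ p, ∀ y ∉ K, g p y = 0) (hg : ContDiff ℝ n ↿g) :
    ContDiff ℝ n fun p => ∫ y, g p y ∂μ := by
  -- The integral is the convolution of `1` with the reflection of `g p`, evaluated at `0`.
  have hconv := contDiffOn_convolution_right_with_param (μ := μ) (f := fun _ : E => (1 : ℝ))
    (ContinuousLinearMap.lsmul ℝ ℝ) (g := fun p y => g p (-y)) isOpen_univ hK.neg
    (fun p y _ hy => hgK p (-y) (by simpa using hy)) (locallyIntegrable_const 1)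
    (hg.comp (contDiff_fst.prodMk contDiff_snd.neg)).contDiffOn
  rw [univ_prod_univ, contDiffOn_univ] at hconv
  simpa [Function.comp_def, convolution] using hconv.comp (contDiff_prodMk_left 0)

theorem fderiv_integral_apply_of_isCompact [LocallyCompactSpace P]
    (hK : IsCompact K) (hgK : ∀ p, ∀ y ∉ K, g p y = 0) (hg : ContDiff ℝ 1 ↿g) (p q : P) :
    fderiv ℝ (fun p => ∫ y, g p y ∂μ) p q = ∫ y, fderiv ℝ (g · y) p q ∂μ := by
  have hgy : ∀ p, Continuous (g p) := fun p => hg.continuous.comp (.prodMk_right p)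
  have hgi : ∀ p, Integrable (g p) μ := fun p =>
    (hgy p).integrable_of_hasCompactSupport (.intro hK (hgK p))
  have hgp : ∀ y, Differentiable ℝ (g · y) := fun y =>
    (hg.comp (contDiff_prodMk_left y)).differentiable one_ne_zero
  have hg' : Continuous fun q : P × E => fderiv ℝ (g · q.2) q.1 :=
    Continuous.fderiv_one (hg.comp (by fun_prop : ContDiff ℝ 1 fun r : (P × E) × P => (r.2, r.1.2)))
      continuous_fst
  have hg'p : Continuous fun y => fderiv ℝ (g · y) p := hg'.comp (.prodMk_right p)
  have hg'K : ∀ p, ∀ y ∉ K, fderiv ℝ (g · y) p = 0 := fun p y hy => by simp [hgK _ y hy]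
  have hg'i : Integrable (fun y => fderiv ℝ (g · y) p) μ :=
    hg'p.integrable_of_hasCompactSupport (.intro hK (hg'K p))
  obtain ⟨B, hB, hpB⟩ := exists_compact_mem_nhds p
  obtain ⟨C, hC⟩ := (hB.prod hK).exists_bound_of_continuousOn hg'.continuousOn
  have hderiv : HasFDerivAt (fun p => ∫ y, g p y ∂μ) (∫ y, fderiv ℝ (g · y) p ∂μ) p := by
    refine hasFDerivAt_integral_of_dominated_of_fderiv_le (F' := fun p y => fderiv ℝ (g · y) p)
      (bound := K.indicator fun _ => C) hpB (.of_forall fun q => (hgi q).aestronglyMeasurable)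
      (hgi p) hg'i.aestronglyMeasurable (.of_forall fun y q hq => ?_)
      ((integrableOn_const hK.measure_lt_top.ne).integrable_indicator hK.measurableSet)
      (.of_forall fun y q _ => (hgp y q).hasFDerivAt)
    by_cases hy : y ∈ K
    · simpa [hy] using hC (q, y) ⟨hq, hy⟩
    · simp [hy, hg'K]
  rw [hderiv.fderiv, ContinuousLinearMap.integral_apply hg'i]

end ParametricIntegral

section ScaledMean

variable {E Y : Type*} [NormedAddCommGroup E] [NormedSpace ℝ E] [MeasurableSpace E]
  [NormedAddCommGroup Y] [NormedSpace ℝ Y] {μ : Measure E} {φ : E → ℝ} {u : E → Y}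

/-- The mean of `u` around `x` at scale `s` with weight `φ`, as a function of `(s, x)`. -/
def scaledMean (μ : Measure E) (φ : E → ℝ) (u : E → Y) (p : ℝ × E) : Y :=
  ∫ y, φ y • u (p.2 + p.1 • y) ∂μ

theorem scaledMean_zero_fst [CompleteSpace Y] (hφ : ∫ y, φ y ∂μ = 1) (u : E → Y) (x : E) :
    scaledMean μ φ u (0, x) = u x := by
  simp [scaledMean, integral_smul_const, hφ]

variable [BorelSpace E]

theorem contDiff_scaledMean [IsLocallyFiniteMeasure μ] {n : ℕ∞} (hφ : ContDiff ℝ n φ)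
    (hφc : HasCompactSupport φ) (hu : ContDiff ℝ n u) : ContDiff ℝ n (scaledMean μ φ u) :=
  contDiff_integral_of_isCompact hφc.isCompact
    (fun p y hy => by simp [image_eq_zero_of_notMem_tsupport hy])
    ((hφ.comp contDiff_snd).smul (hu.comp (by fun_prop)))

variable [FiniteDimensional ℝ E]

theorem fderiv_scaledMean_apply [IsLocallyFiniteMeasure μ] (hφ : ContDiff ℝ 1 φ)
    (hφc : HasCompactSupport φ) (hu : ContDiff ℝ 1 u) (p q : ℝ × E) :
    fderiv ℝ (scaledMean μ φ u) p q =
      ∫ y, φ y • fderiv ℝ u (p.2 + p.1 • y) (q.2 + q.1 • y) ∂μ := by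
  have hg : ContDiff ℝ 1 ↿fun (p : ℝ × E) y => φ y • u (p.2 + p.1 • y) :=
    (hφ.comp contDiff_snd).smul (hu.comp (by fun_prop))
  have hgK : ∀ p : ℝ × E, ∀ y ∉ tsupport φ, φ y • u (p.2 + p.1 • y) = 0 := fun p y hy => by
    simp [image_eq_zero_of_notMem_tsupport hy]
  refine (fderiv_integral_apply_of_isCompact hφc.isCompact hgK hg p q).trans ?_
  refine integral_congr_ae (.of_forall fun y => ?_)
  have hinner : HasFDerivAt (fun p : ℝ × E => p.2 + p.1 • y)
      (.snd ℝ ℝ E + (ContinuousLinearMap.fst ℝ ℝ E).smulRight y) p :=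
    hasFDerivAt_snd.add (hasFDerivAt_fst.smul_const y)
  have houter : HasFDerivAt u (fderiv ℝ u (p.2 + p.1 • y)) (p.2 + p.1 • y) :=
    (hu.differentiable one_ne_zero _).hasFDerivAt
  exact congr($(((houter.comp p hinner).const_smul (φ y)).fderiv) q)

theorem fst_smul_fderiv_scaledMean_apply [μ.IsAddHaarMeasure] (hφ : ContDiff ℝ 1 φ)
    (hφc : HasCompactSupport φ) (hu : ContDiff ℝ 1 u) (p q : ℝ × E) :
    p.1 • fderiv ℝ (scaledMean μ φ u) p q =
      -scaledMean μ (divergence fun y => φ y • (q.2 + q.1 • y)) u p := by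
  let w : E → Y := fun y => u (p.2 + p.1 • y)
  have hw : ContDiff ℝ 1 w := hu.comp (by fun_prop)
  have hw' : ∀ y v, fderiv ℝ w y v = p.1 • fderiv ℝ u (p.2 + p.1 • y) v := fun y v => by
    have hinner : HasFDerivAt (fun y => p.2 + p.1 • y) (p.1 • .id ℝ E) y :=
      ((hasFDerivAt_id y).const_smul p.1).const_add p.2
    have houter : HasFDerivAt u (fderiv ℝ u (p.2 + p.1 • y)) (p.2 + p.1 • y) :=
      (hu.differentiable one_ne_zero _).hasFDerivAt
    rw [show fderiv ℝ w y = _ from (houter.comp y hinner).fderiv]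
    simp
  calc p.1 • fderiv ℝ (scaledMean μ φ u) p q
      = ∫ y, fderiv ℝ w y (φ y • (q.2 + q.1 • y)) ∂μ := by
        rw [fderiv_scaledMean_apply hφ hφc hu, ← integral_smul]
        simp only [map_smul, hw', smul_comm p.1]
    _ = -scaledMean μ (divergence fun y => φ y • (q.2 + q.1 • y)) u p :=
        integral_fderiv_apply_eq_neg_integral_divergence_smul μ (by fun_prop) hφc.smul_right hw

theorem contDiff_fst_smul_scaledMean [μ.IsAddHaarMeasure] {n : ℕ∞} (hn : 1 ≤ n)
    (hφ : ContDiff ℝ (n + 1) φ) (hφc : HasCompactSupport φ) (hu : ContDiff ℝ n u) :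
    ContDiff ℝ (n + 1) fun p : ℝ × E => p.1 • scaledMean μ φ u p := by
  have hn' : (1 : WithTop ℕ∞) ≤ n := mod_cast hn
  have hφn : ContDiff ℝ n φ := hφ.of_le le_self_add
  have hM : ContDiff ℝ n (scaledMean μ φ u) := contDiff_scaledMean hφn hφc hu
  have hM' : Differentiable ℝ (scaledMean μ φ u) := (hM.of_le hn').differentiable one_ne_zero
  have hdiv : ∀ q : ℝ × E, ContDiff ℝ n
      (scaledMean μ (divergence fun y => φ y • (q.2 + q.1 • y)) u) := fun q =>
    contDiff_scaledMean (contDiff_divergence (by fun_prop))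
      (hasCompactSupport_divergence hφc.smul_right) hu
  rw [contDiff_succ_iff_fderiv_apply]
  refine ⟨differentiable_fst.smul hM', by simp, fun q => ?_⟩
  have hfderiv : ∀ p : ℝ × E, fderiv ℝ (fun p : ℝ × E => p.1 • scaledMean μ φ u p) p q =
      -scaledMean μ (divergence fun y => φ y • (q.2 + q.1 • y)) u p + q.1 • scaledMean μ φ u p := by
    intro p
    rw [← fst_smul_fderiv_scaledMean_apply (hφn.of_le hn') hφc (hu.of_le hn'),
      (hasFDerivAt_fst.fun_smul (hM' p).hasFDerivAt).fderiv]
    rfl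
  simp only [hfderiv]
  exact (hdiv q).neg.add (hM.const_smul q.1)

end ScaledMean

section NormalDerivative

variable {E Y : Type*} [NormedAddCommGroup E] [NormedSpace ℝ E] [FiniteDimensional ℝ E]
  [NormedAddCommGroup Y] [NormedSpace ℝ Y] [CompleteSpace Y] {n : ℕ∞}

-- Multiplying the means of `u` at scale `s` by `s` gains the derivative that `s • u x` lacks.
theorem exists_contDiff_hasFDerivAt_fst_smulRight (hn : 1 ≤ n) {u : E → Y} (hu : ContDiff ℝ n u) :
    ∃ G : ℝ × E → Y, ContDiff ℝ (n + 1) G ∧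
      ∀ x, HasFDerivAt G ((ContinuousLinearMap.fst ℝ ℝ E).smulRight (u x)) (0, x) := by
  borelize E
  let μ : Measure E := Measure.addHaar
  let χ : ContDiffBump (0 : E) := default
  have hM : ContDiff ℝ n (scaledMean μ (χ.normed μ) u) :=
    contDiff_scaledMean χ.contDiff_normed χ.hasCompactSupport_normed hu
  refine ⟨fun p => p.1 • scaledMean μ (χ.normed μ) u p, contDiff_fst_smul_scaledMean hn
    (mod_cast χ.contDiff_normed (n := n + 1)) χ.hasCompactSupport_normed hu, fun x => ?_⟩
  have hM' := hM.differentiable (mod_cast (one_pos.trans_le hn).ne') (0, x)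
  simpa [scaledMean_zero_fst (χ.integral_normed) u] using
    (hasFDerivAt_fst (𝕜 := ℝ) (p := ((0 : ℝ), x))).fun_smul hM'.hasFDerivAt

theorem exists_contDiff_hasFDerivAt_smulRight_of_eq_zero (hn : 1 ≤ n) {F : E → ℝ}
    (hF : ContDiff ℝ (n + 1) F) {u : E → Y} (hu : ContDiff ℝ n u) :
    ∃ P : E → Y, ContDiff ℝ (n + 1) P ∧
      ∀ x, F x = 0 → HasFDerivAt P ((fderiv ℝ F x).smulRight (u x)) x := by
  obtain ⟨G, hG, hG'⟩ := exists_contDiff_hasFDerivAt_fst_smulRight hn hu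
  refine ⟨fun x => G (F x, x), hG.comp (hF.prodMk contDiff_id), fun x hx => ?_⟩
  have hFx : HasFDerivAt F (fderiv ℝ F x) x :=
    (hF.differentiable (by simp) x).hasFDerivAt
  exact HasFDerivAt.comp x (g := G) (hx ▸ hG' x) (hFx.prodMk (hasFDerivAt_id x))

end NormalDerivative

section ZeroSet

variable {E Y : Type*} [NormedAddCommGroup E] [NormedSpace ℝ E]
  [NormedAddCommGroup Y] [NormedSpace ℝ Y]

theorem exists_contDiff_hasCompactSupport_eventuallyEq [FiniteDimensional ℝ E] {S : Set E}
    (hS : Bornology.IsBounded S) {n : ℕ∞} {f : E → Y} (hf : ContDiff ℝ n f) :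
    ∃ g : E → Y, ContDiff ℝ n g ∧ HasCompactSupport g ∧ ∀ x ∈ S, g =ᶠ[𝓝 x] f := by
  obtain ⟨r, hr, hSr⟩ := hS.subset_ball_lt 0 0
  let χ : ContDiffBump (0 : E) := ⟨r, r + 1, hr, by linarith⟩
  refine ⟨fun x => χ x • f x, χ.contDiff.smul hf, χ.hasCompactSupport.smul_right, fun x hx => ?_⟩
  filter_upwards [χ.eventuallyEq_one_of_mem_ball (hSr hx)] with y hy
  simp [hy]

theorem setOf_eq_zero_subset_closure_setOf_neg {F : E → ℝ}
    (hF : ∀ x, F x = 0 → fderiv ℝ F x ≠ 0) : {x | F x = 0} ⊆ closure {x | F x < 0} := by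
  intro x hx
  by_contra hcl
  rw [mem_closure_iff_frequently, not_frequently] at hcl
  have hmin : IsLocalMin F x := hcl.mono fun y hy => by
    rw [show F x = 0 from hx]
    exact not_lt.mp hy
  exact hF x hx hmin.fderiv_eq_zero

end ZeroSet

section SolenoidalField

variable {E : Type*} [NormedAddCommGroup E] [NormedSpace ℝ E]

/-- The field `(c · ∇)Q - (div Q) c`, which is divergence free by the symmetry of second
derivatives. In dimension three it is `curl (Q × c)`. -/
def solenoidalField (Q : E → E) (c z : E) : E := fderiv ℝ Q z c - divergence Q z • c

theorem solenoidalField_eq_zero_of_notMem_tsupport {Q : E → E} {z : E} (hz : z ∉ tsupport Q)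
    (c : E) : solenoidalField Q c z = 0 := by
  have hQ : fderiv ℝ Q z = 0 := fderiv_of_notMem_tsupport ℝ hz
  simp [solenoidalField, divergence, hQ]

variable [FiniteDimensional ℝ E]

theorem contDiff_solenoidalField {n : WithTop ℕ∞} {Q : E → E} (hQ : ContDiff ℝ (n + 1) Q) :
    ContDiff ℝ n ↿(solenoidalField Q) :=
  ((hQ.fderiv_right le_rfl).comp contDiff_snd).clm_apply contDiff_fst |>.sub
    (((contDiff_divergence hQ).comp contDiff_snd).smul contDiff_fst)

theorem divergence_solenoidalField {Q : E → E} (hQ : ContDiff ℝ 2 Q) (c z : E) :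
    divergence (solenoidalField Q c) z = 0 := by
  have hQ' : DifferentiableAt ℝ (fderiv ℝ Q) z :=
    (hQ.fderiv_right (m := 1) le_rfl).differentiable one_ne_zero z
  let H : E →L[ℝ] E →L[ℝ] E := fderiv ℝ (fderiv ℝ Q) z
  have hsymm : H.flip c = H c := by
    ext v
    exact (hQ.contDiffAt.isSymmSndFDerivAt (by simp)) v c
  have hfield : HasFDerivAt (solenoidalField Q c)
      (H.flip c - ((traceL E).comp H).smulRight c) z := by
    have hdir : HasFDerivAt (fun z => fderiv ℝ Q z c) (H.flip c) z := by
      simpa using hQ'.hasFDerivAt.clm_apply (hasFDerivAt_const c z)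
    exact hdir.sub ((hasFDerivAt_divergence hQ').smul_const c)
  rw [divergence, hfield.fderiv, hsymm, ← traceL_apply, map_sub, sub_eq_zero]
  exact (LinearMap.trace_smulRight (R := ℝ) (M := E) ((traceL E).comp H : E →L[ℝ] ℝ) c).symm

end SolenoidalField

section ZeroSetNormal

variable {E : Type*} [NormedAddCommGroup E] [InnerProductSpace ℝ E] [CompleteSpace E]

/-- The unit normal to `{F = 0}` that points into `{F < 0}`; it is `0` where `∇ F = 0`. -/
def zeroSetNormal (F : E → ℝ) (x : E) : E := -(‖∇ F x‖⁻¹ • ∇ F x)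

theorem norm_zeroSetNormal {F : E → ℝ} {x : E} (hx : ∇ F x ≠ 0) : ‖zeroSetNormal F x‖ = 1 := by
  rw [zeroSetNormal, norm_neg]
  exact norm_smul_inv_norm hx

end ZeroSetNormal

section BoundaryDerivative

variable {E : Type*} [NormedAddCommGroup E] [InnerProductSpace ℝ E] [FiniteDimensional ℝ E]

-- The trace of `ν ⊗ ν - (d - 1)⁻¹ I` is `-(d - 1)⁻¹`, so the multiples of `c` cancel.
theorem solenoidalField_eq_inner_smul {Q : E → E} {ν z : E} (hE : finrank ℝ E ≠ 1)
    (hν : ‖ν‖ = 1)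
    (hQ : HasFDerivAt Q (InnerProductSpace.rankOne ℝ ν ν -
      (finrank ℝ E - 1 : ℝ)⁻¹ • ContinuousLinearMap.id ℝ E) z) (c : E) :
    solenoidalField Q c z = ⟪c, ν⟫ • ν := by
  have hd : (finrank ℝ E - 1 : ℝ) ≠ 0 := sub_ne_zero.2 (mod_cast hE)
  have hdiv : divergence Q z = -(finrank ℝ E - 1 : ℝ)⁻¹ := by
    rw [divergence, hQ.fderiv, ContinuousLinearMap.toLinearMap_sub, map_sub,
      InnerProductSpace.trace_rankOne, ContinuousLinearMap.toLinearMap_smul, map_smul,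
      ContinuousLinearMap.coe_id, LinearMap.trace_id, real_inner_self_eq_norm_sq, hν, smul_eq_mul]
    linear_combination -(mul_inv_cancel₀ hd)
  rw [solenoidalField, hdiv, hQ.fderiv]
  simp [real_inner_comm]

theorem exists_contDiff_hasFDerivAt_rankOne_zeroSetNormal {n : ℕ∞} (hn : 1 ≤ n) {F : E → ℝ}
    (hF : ContDiff ℝ (n + 1) F) (hF' : ∀ x, F x = 0 → ∇ F x ≠ 0) :
    ∃ P : E → E, ContDiff ℝ (n + 1) P ∧ ∀ x, F x = 0 →
      HasFDerivAt P (InnerProductSpace.rankOne ℝ (zeroSetNormal F x) (zeroSetNormal F x)) x := by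
  have hgrad : ContDiff ℝ n (∇ F) :=
    (InnerProductSpace.toDual ℝ E).symm.contDiff.comp (hF.fderiv_right le_rfl)
  -- Adding `F ^ 2` makes the denominator positive everywhere without changing it on `{F = 0}`.
  have hpos : ∀ x, ‖∇ F x‖ ^ 2 + F x ^ 2 ≠ 0 := fun x hx => by
    have hFx : F x = 0 := by nlinarith [sq_nonneg ‖∇ F x‖, sq_nonneg (F x)]
    exact hF' x hFx (by simpa [hFx] using hx)
  obtain ⟨P, hP, hP'⟩ := exists_contDiff_hasFDerivAt_smulRight_of_eq_zero hn hF
    (((hgrad.norm_sq ℝ).add ((hF.of_le le_self_add).pow 2)).inv hpos |>.smul hgrad)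
  refine ⟨P, hP, fun x hx => (hP' x hx).congr_fderiv ?_⟩
  ext v
  simp [zeroSetNormal, hx, smul_smul, ← inner_gradient_left, sq, mul_comm]

theorem exists_contDiff_hasCompactSupport_hasFDerivAt {n : ℕ∞} (hn : 1 ≤ n) {F : E → ℝ}
    (hF : ContDiff ℝ (n + 1) F) (hFb : Bornology.IsBounded {x | F x < 0})
    (hF' : ∀ x, F x = 0 → ∇ F x ≠ 0) (α : ℝ) :
    ∃ Q : E → E, ContDiff ℝ (n + 1) Q ∧ HasCompactSupport Q ∧ ∀ x, F x = 0 →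
      HasFDerivAt Q (InnerProductSpace.rankOne ℝ (zeroSetNormal F x) (zeroSetNormal F x) -
        α • ContinuousLinearMap.id ℝ E) x := by
  obtain ⟨P, hP, hP'⟩ := exists_contDiff_hasFDerivAt_rankOne_zeroSetNormal hn hF hF'
  have hb : Bornology.IsBounded {x | F x = 0} := hFb.closure.subset <|
    setOf_eq_zero_subset_closure_setOf_neg fun x hx h => hF' x hx (by simp [gradient, h])
  obtain ⟨Q, hQ, hQc, hQP⟩ := exists_contDiff_hasCompactSupport_eventuallyEq hb (n := n + 1)
    (hP.sub (contDiff_id.const_smul α))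
  exact ⟨Q, hQ, hQc, fun x hx =>
    ((hP' x hx).sub ((hasFDerivAt_id x).const_smul α)).congr_of_eventuallyEq (hQP x hx)⟩

end BoundaryDerivative

section Corrector

variable {E : Type*} [NormedAddCommGroup E] [InnerProductSpace ℝ E] [FiniteDimensional ℝ E]

/-- A solenoidal field `V` of class `C ^ n` which, at all times in `K`, vanishes outside the ball
of radius `R` and agrees on the boundary of the body `{x | F (x - m t) < 0}` with the normal part
of its velocity. For `n = 1` the smoothness and the support condition bound `V` in the Sobolev
spaces `W^{1,2}` and `W^{1,∞}`. -/
structure IsSolenoidalCorrector (n : ℕ∞) (K : Set ℝ) (m : ℝ → E) (F : E → ℝ) (R : ℝ)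
    (V : ℝ → E → E) : Prop where
  contDiff : ContDiff ℝ n ↿V
  divergence_eq_zero : ∀ t x, divergence (V t) x = 0
  boundary_eq : ∀ t x, F (x - m t) = 0 →
    V t x = ⟪deriv m t, zeroSetNormal F (x - m t)⟫ • zeroSetNormal F (x - m t)
  eq_zero_of_lt_norm : ∀ t ∈ K, ∀ x, R < ‖x‖ → V t x = 0

theorem stmt0_general (hE : finrank ℝ E ≠ 1) {n : ℕ∞} (hn : 1 ≤ n) {K : Set ℝ}
    (hK : IsCompact K) {m : ℝ → E} (hm : ContDiff ℝ (n + 1) m) {F : E → ℝ}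
    (hF : ContDiff ℝ (n + 1) F) (hFb : Bornology.IsBounded {x | F x < 0})
    (hF' : ∀ x, F x = 0 → ∇ F x ≠ 0) :
    ∃ R : ℝ, 0 < R ∧ ∃ V : ℝ → E → E, IsSolenoidalCorrector n K m F R V := by
  have hn' : (2 : WithTop ℕ∞) ≤ n + 1 := by
    rw [← one_add_one_eq_two]
    gcongr
    exact mod_cast hn
  obtain ⟨Q, hQ, hQc, hQ'⟩ := exists_contDiff_hasCompactSupport_hasFDerivAt hn hF hFb hF'
    (finrank ℝ E - 1 : ℝ)⁻¹
  obtain ⟨R, hR, hKR⟩ := ((hK.prod hQc.isCompact).image_of_continuousOn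
    (f := fun p : ℝ × E => m p.1 + p.2) (by have := hm.continuous; fun_prop)).isBounded
    |>.exists_pos_norm_le
  refine ⟨R, hR, fun t x => solenoidalField Q (deriv m t) (x - m t), ?_, ?_, ?_, ?_⟩
  · have hm' : ContDiff ℝ n (deriv m) := hm.deriv'
    have hm0 : ContDiff ℝ n m := hm.of_le le_self_add
    exact (contDiff_solenoidalField hQ).comp
      ((hm'.comp contDiff_fst).prodMk (contDiff_snd.sub (hm0.comp contDiff_fst)))
  · intro t x
    rw [divergence_comp_sub (solenoidalField Q (deriv m t))]
    exact divergence_solenoidalField (hQ.of_le hn') _ _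
  · exact fun t x hx => solenoidalField_eq_inner_smul hE (norm_zeroSetNormal (hF' _ hx))
      (hQ' _ hx) _
  · refine fun t ht x hx => solenoidalField_eq_zero_of_notMem_tsupport (fun hz => ?_) _
    exact hx.not_ge (by simpa using hKR _ ⟨(t, x - m t), ⟨ht, hz⟩, rfl⟩)

end Corrector

section Euclidean

theorem grd_eq_gradient (F : E3 → ℝ) (x : E3) : grd F x = ∇ F x := by
  have h := (EuclideanSpace.basisFun (Fin 3) ℝ).sum_repr' (∇ F x)
  simpa [grd, pd, e3, inner_gradient_right] using h

theorem dvg_eq_divergence (u : E3 → E3) (x : E3) : dvg u x = divergence u x := by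
  rw [divergence_eq_sum_coord (EuclideanSpace.basisFun (Fin 3) ℝ).toBasis]
  simp [dvg, e3]

theorem nvec_eq_zeroSetNormal (F : E3 → ℝ) (m : ℝ → E3) (t : ℝ) (x : E3) :
    nvec F m t x = zeroSetNormal F (x - m t) := by
  rw [nvec, zeroSetNormal, grd_eq_gradient]

theorem memLp_gradm {u : E3 → E3} (hu : ContDiff ℝ 1 u) (huc : HasCompactSupport u)
    (p : ℝ≥0∞) (μ : Measure E3) [IsFiniteMeasureOnCompacts μ] (i j : Fin 3) :
    MemLp (fun x => gradm u x i j) p μ := by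
  have hcont : Continuous fun x => fderiv ℝ u x (e3 j) i := by fun_prop
  have hsupp : HasCompactSupport fun x => fderiv ℝ u x (e3 j) i :=
    (huc.fderiv_apply (𝕜 := ℝ) (e3 j)).comp_left (g := fun v : E3 => v i) rfl
  exact hcont.memLp_of_hasCompactSupport hsupp

theorem isCorrector_of_isSolenoidalCorrector {T : ℝ} {m : ℝ → E3} {F : E3 → ℝ} {R : ℝ}
    {V : ℝ → E3 → E3} (hV : IsSolenoidalCorrector 1 (Icc 0 T) m F R V) :
    IsCorrector T m F R V where
  smooth := hV.contDiff
  sobolev t ht := by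
    have hVt : ContDiff ℝ 1 (V t) := hV.contDiff.comp (contDiff_prodMk_right t)
    have hVc : HasCompactSupport (V t) := .intro (isCompact_closedBall 0 R) fun x hx =>
      hV.eq_zero_of_lt_norm t ht x (by simpa using hx)
    exact ⟨(hVt.continuous.memLp_of_hasCompactSupport hVc).2,
      fun i j => (memLp_gradm hVt hVc 2 _ i j).2,
      (hVt.continuous.memLp_of_hasCompactSupport hVc).2,
      fun i j => (memLp_gradm hVt hVc ⊤ _ i j).2⟩
  divfree t _ x _ := (dvg_eq_divergence (V t) x).trans (hV.divergence_eq_zero t x)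
  bc t _ x hx := by simpa only [nvec_eq_zeroSetNormal] using hV.boundary_eq t x hx
  supp := hV.eq_zero_of_lt_norm

end Euclidean

/-- Lemma 2.1: existence of a solenoidal corrector field `V`,
compactly supported, divergence free on `Ω_t`, matching the normal boundary velocity
`-ν_t n = (m'(t)·n) n` of the translating body. -/
theorem stmt0 (T : ℝ) (hT : 0 < T) (m : ℝ → E3) (hm : ContDiff ℝ 2 m) (hm0 : m 0 = 0)
    (F : E3 → ℝ) (hF : DomainHyp F) :
    ∃ R : ℝ, 0 < R ∧ ∃ V : ℝ → E3 → E3, IsCorrector T m F R V := by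
  have htwo : (2 : WithTop ℕ∞) = (1 : ℕ∞) + 1 := one_add_one_eq_two.symm
  obtain ⟨R, hR, V, hV⟩ := stmt0_general (by simp) le_rfl isCompact_Icc (htwo ▸ hm)
    (htwo ▸ hF.smooth) hF.bounded fun x hx => grd_eq_gradient F x ▸ hF.nondeg x hx
  exact ⟨R, hR, V, isCorrector_of_isSolenoidalCorrector hV⟩
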